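/- In the gluing setup, for every x ∈ V_p, every g ∈ 𝔉, and every y ∈ V_g, we have d̂(x,y) = inf{ p̂(x,b) + ĝ(b,y) : b ∈ V_g ∩ V_p }. -/

import Mathlib

open scoped Classical

universe u

namespace GraphMetricPaper

variable {X : Type u}

/-- The vertex set `V = ⋃ E` of a graph given by an adjacency relation `E`. -/
def Vtx (E : X → X → Prop) : Set X := {x | ∃ y, E x y}

/-- Two points are joined by a walk in the graph `E`. -/
def Joined (E : X → X → Prop) (x y : X) : Prop :=
  ∃ (n : ℕ) (c : ℕ → X), c 0 = x ∧ c n = y ∧ ∀ i, i < n → E (c i) (c (i + 1))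

/-- The set of weights of walks from `x` to `y`. -/
def walkSums (E : X → X → Prop) (d : X → X → ℝ) (x y : X) : Set ℝ :=
  {s | ∃ (n : ℕ) (c : ℕ → X), c 0 = x ∧ c n = y ∧ (∀ i, i < n → E (c i) (c (i + 1))) ∧
    s = ∑ i ∈ Finset.range n, d (c i) (c (i + 1))}

/-- The shortest-path pseudometric `d̂` determined by a weight function `d` on a graph `E`. -/
noncomputable def hatd (E : X → X → Prop) (d : X → X → ℝ) (x y : X) : ℝ :=
  sInf (walkSums E d x y)

/-- The function `ď` bounding the possible extensions of `d` from below: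
`ď(x,y) = sup_{ab ∈ E} max {0, d(ab) - d̂(a,x) - d̂(y,b)}`. -/
noncomputable def checkd (E : X → X → Prop) (d : X → X → ℝ) (x y : X) : ℝ :=
  sSup ({0} ∪ {r | ∃ a b, E a b ∧ r = d a b - hatd E d a x - hatd E d y b})

/-- The pseudometric `d̈` on doubletons:
`d̈(xy,uv) = min {d̂(x,u) + d̂(y,v), d̂(x,v) + d̂(y,u)}`. -/
noncomputable def ddot (E : X → X → Prop) (d : X → X → ℝ) (x y u v : X) : ℝ :=
  min (hatd E d x u + hatd E d y v) (hatd E d x v + hatd E d y u)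

/-- `d` is a graph pseudometric with edge relation `E`:  `E` is a (symmetric, irreflexive)
connected graph, `d` is a nonnegative symmetric weight on the edges, and `d = d̂` on edges. -/
structure IsGraphPseudometric (E : X → X → Prop) (d : X → X → ℝ) : Prop where
  symm : ∀ ⦃a b⦄, E a b → E b a
  irrefl : ∀ a, ¬ E a a
  wt_symm : ∀ ⦃a b⦄, E a b → d a b = d b a
  nonneg : ∀ ⦃a b⦄, E a b → 0 ≤ d a b
  connected : ∀ x ∈ Vtx E, ∀ y ∈ Vtx E, Joined E x y
  edge_eq : ∀ ⦃a b⦄, E a b → d a b = hatd E d a b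

/-- A graph metric is a graph pseudometric with strictly positive weights. -/
def IsGraphMetric (E : X → X → Prop) (d : X → X → ℝ) : Prop :=
  IsGraphPseudometric E d ∧ ∀ ⦃a b⦄, E a b → 0 < d a b

/-- A floppy graph pseudometric: `ď(x,y) < d̂(x,y)` for every `xy ∈ [V]² \ E`. -/
def FloppyPseudometric (E : X → X → Prop) (d : X → X → ℝ) : Prop :=
  IsGraphPseudometric E d ∧
    ∀ x ∈ Vtx E, ∀ y ∈ Vtx E, x ≠ y → ¬ E x y → checkd E d x y < hatd E d x y

/-- A floppy graph metric: `ď(x,y) < d̂(x,y)` for every `xy ∈ [V]² \ E`. -/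
def FloppyMetric (E : X → X → Prop) (d : X → X → ℝ) : Prop :=
  IsGraphMetric E d ∧
    ∀ x ∈ Vtx E, ∀ y ∈ Vtx E, x ≠ y → ¬ E x y → checkd E d x y < hatd E d x y

/-- The edge relation of the one-step extension `E ∪ {xy}`. -/
def extEdge (E : X → X → Prop) (x y : X) : X → X → Prop :=
  fun a b => E a b ∨ (a = x ∧ b = y) ∨ (a = y ∧ b = x)

/-- The weight function of the one-step extension `d ∪ {⟨xy, r⟩}`. -/
noncomputable def extWt (d : X → X → ℝ) (x y : X) (r : ℝ) : X → X → ℝ :=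
  fun a b => if (a = x ∧ b = y) ∨ (a = y ∧ b = x) then r else d a b

/-- The set `[V]² \ E` of unordered pairs of distinct vertices that are not edges. -/
def nonEdgePairs (E : X → X → Prop) : Set (Sym2 X) :=
  {e | ∃ a b : X, e = s(a, b) ∧ a ≠ b ∧ a ∈ Vtx E ∧ b ∈ Vtx E ∧ ¬ E a b}

/-- A set of (unordered) weighted pairs, presented as a relation `R`, is a full metric
on `V`: it is symmetric, its domain is exactly `[V]²`, it is single-valued, positive,
and satisfies the triangle inequality. -/
def IsFullMetricRel (V : Set X) (R : X → X → ℝ → Prop) : Prop :=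
  (∀ a b r, R a b r → R b a r) ∧
  (∀ a b r, R a b r → a ∈ V ∧ b ∈ V ∧ a ≠ b) ∧
  (∀ a b, a ∈ V → b ∈ V → a ≠ b → ∃ r, R a b r) ∧
  (∀ a b r s, R a b r → R a b s → r = s) ∧
  (∀ a b r, R a b r → 0 < r) ∧
  (∀ a b c r s t, R a b r → R b c s → R a c t → t ≤ r + s)

/-- A weight function `D` on `[V]²` is a full metric on `V`. -/
def IsFullMetricOn (V : Set X) (D : X → X → ℝ) : Prop :=
  (∀ a b, a ∈ V → b ∈ V → a ≠ b → D a b = D b a) ∧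
  (∀ a b, a ∈ V → b ∈ V → a ≠ b → 0 < D a b) ∧
  (∀ a b c, a ∈ V → b ∈ V → c ∈ V → a ≠ b → b ≠ c → a ≠ c → D a c ≤ D a b + D b c)

/-- Player I has a winning strategy in the metric-extending game `Game_d(lam, Fam)`:
there are functions `S1, S2` choosing, for each inning `β < lam` and each sequence of
previous answers of player II, a legal doubleton in `[V]²` and a set from `Fam`, such that
for every play of player II respecting the strategy, the resulting relation
`d ∪ {⟨x_α y_α, r_α⟩ : α < lam}` is a full metric on `V`. -/
def WinningStratI (V : Set X) (E : X → X → Prop) (d : X → X → ℝ)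
    (lam : Ordinal.{u}) (Fam : Set (Set ℝ)) : Prop :=
  ∃ (S1 : ∀ β : Ordinal.{u}, β < lam → (∀ α : Ordinal.{u}, α < β → ℝ) → X × X)
    (S2 : ∀ β : Ordinal.{u}, β < lam → (∀ α : Ordinal.{u}, α < β → ℝ) → Set ℝ),
    (∀ β hβ s, S2 β hβ s ∈ Fam) ∧
    (∀ β hβ s, (S1 β hβ s).1 ∈ V ∧ (S1 β hβ s).2 ∈ V ∧ (S1 β hβ s).1 ≠ (S1 β hβ s).2) ∧
    (∀ s : ∀ α : Ordinal.{u}, α < lam → ℝ,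
      (∀ α (hα : α < lam), s α hα ∈ S2 α hα (fun γ hγ => s γ (hγ.trans hα))) →
      IsFullMetricRel V (fun a b r =>
        (E a b ∧ r = d a b) ∨
        ∃ α, ∃ hα : α < lam,
          ((a = (S1 α hα (fun γ hγ => s γ (hγ.trans hα))).1 ∧
            b = (S1 α hα (fun γ hγ => s γ (hγ.trans hα))).2) ∨
           (a = (S1 α hα (fun γ hγ => s γ (hγ.trans hα))).2 ∧
            b = (S1 α hα (fun γ hγ => s γ (hγ.trans hα))).1)) ∧
          r = s α hα))

/-- Player II has a winning strategy in the metric-extending game `Game_d(lam, Fam)`: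
there is a function `T` assigning to each inning `β < lam` and each sequence of moves of
player I (of length `β + 1`) an answer in the set component of the last move, such that
for every legal play of player I, the resulting relation is not a full metric on `V`. -/
def WinningStratII (V : Set X) (E : X → X → Prop) (d : X → X → ℝ)
    (lam : Ordinal.{u}) (Fam : Set (Set ℝ)) : Prop :=
  ∃ T : ∀ β : Ordinal.{u}, β < lam → (∀ α : Ordinal.{u}, α ≤ β → (X × X) × Set ℝ) → ℝ,
    (∀ β hβ p, (p β le_rfl).2 ∈ Fam → T β hβ p ∈ (p β le_rfl).2) ∧
    (∀ p : ∀ α : Ordinal.{u}, α < lam → (X × X) × Set ℝ,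
      (∀ α hα, (p α hα).1.1 ∈ V ∧ (p α hα).1.2 ∈ V ∧ (p α hα).1.1 ≠ (p α hα).1.2 ∧
        (p α hα).2 ∈ Fam) →
      ¬ IsFullMetricRel V (fun a b r =>
        (E a b ∧ r = d a b) ∨
        ∃ α, ∃ hα : α < lam,
          ((a = (p α hα).1.1 ∧ b = (p α hα).1.2) ∨
           (a = (p α hα).1.2 ∧ b = (p α hα).1.1)) ∧
          r = T α hα (fun γ hγ => p γ (lt_of_le_of_lt hγ hα))))

/-- The edge relation of the glued graph `E_d = E_p ∪ ⋃_{f ∈ F} E_f`. -/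
def gluedEdge (Ep : X → X → Prop) (F : Set ((X → X → Prop) × (X → X → ℝ))) :
    X → X → Prop :=
  fun a b => Ep a b ∨ ∃ f ∈ F, f.1 a b

/-- `Λ(v; B) = inf {d̂(a,v) + d̂(v,b) - d̂(a,b) : a, b ∈ B}`. -/
noncomputable def Lam (E : X → X → Prop) (d : X → X → ℝ) (v : X) (B : Set X) : ℝ :=
  sInf {r | ∃ a ∈ B, ∃ b ∈ B, r = hatd E d a v + hatd E d v b - hatd E d a b}

/-- The gluing setup: a graph pseudometric `p = (Ep, wp)` and a family `F` of graph
pseudometrics such that each member meets `V_p`, agrees with `p̂` on the intersection of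
the vertex sets, and distinct members only meet inside `V_p`; `wd` is the glued weight
function `d = p ∪ ⋃ F` on `E_d = E_p ∪ ⋃_{f ∈ F} E_f`. -/
structure GluingSetup (Ep : X → X → Prop) (wp : X → X → ℝ)
    (F : Set ((X → X → Prop) × (X → X → ℝ))) (wd : X → X → ℝ) : Prop where
  hp : IsGraphPseudometric Ep wp
  hF : ∀ f ∈ F, IsGraphPseudometric f.1 f.2
  meet : ∀ f ∈ F, (Vtx f.1 ∩ Vtx Ep).Nonempty
  agree : ∀ f ∈ F, ∀ x ∈ Vtx f.1 ∩ Vtx Ep, ∀ y ∈ Vtx f.1 ∩ Vtx Ep, x ≠ y →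
    hatd f.1 f.2 x y = hatd Ep wp x y
  inter_sub : ∀ f ∈ F, ∀ g ∈ F, f ≠ g → Vtx f.1 ∩ Vtx g.1 ⊆ Vtx Ep
  wd_p : ∀ ⦃a b⦄, Ep a b → wd a b = wp a b
  wd_F : ∀ f ∈ F, ∀ ⦃a b⦄, f.1 a b → wd a b = f.2 a b


/-! A passage from `x ∈ V_p` to `y ∈ V_g` through `b ∈ V_g ∩ V_p` can be realised by walks in the
glued graph, so `d̂(x,y)` is at most the infimum. Conversely, follow a walk of the glued graph from
`x` edge by edge: at each vertex `v`, the length covered so far is at least `p̂(x,v)` if `v ∈ V_p`,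
and at least `p̂(x,b) + f̂(b,v)` for some `b ∈ V_f ∩ V_p` if `v ∈ V_f`. An edge of `f` that ends in
`V_p` turns a bound of the second kind into one of the first, since `p̂ ≤ f̂` on `V_f ∩ V_p`; an
edge of `f` that ends outside `V_p` ends in no piece other than `f`. -/

section Walks

variable {E E' : X → X → Prop} {d : X → X → ℝ} {x y z : X} {s t : ℝ}

theorem zero_mem_walkSums (E : X → X → Prop) (d : X → X → ℝ) (x : X) :
    0 ∈ walkSums E d x x :=
  ⟨0, fun _ => x, rfl, rfl, by simp, by simp⟩

theorem add_edge_mem_walkSums (hs : s ∈ walkSums E d x y) (hyz : E y z) :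
    s + d y z ∈ walkSums E d x z := by
  obtain ⟨n, c, h0, rfl, hE, rfl⟩ := hs
  have eq_of_le : ∀ {i}, i ≤ n → Function.update c (n + 1) z i = c i := fun hi =>
    Function.update_of_ne (by lia) _ _
  refine ⟨n + 1, Function.update c (n + 1) z, by rw [eq_of_le n.zero_le, h0],
    Function.update_self .., fun i hi => ?_, ?_⟩
  · obtain hi | rfl := Nat.lt_succ_iff_lt_or_eq.mp hi
    · rw [eq_of_le hi.le, eq_of_le hi]
      exact hE i hi
    · rwa [eq_of_le le_rfl, Function.update_self]
  · rw [Finset.sum_range_succ, eq_of_le le_rfl, Function.update_self]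
    congr 1
    refine Finset.sum_congr rfl fun i hi => ?_
    have hi := Finset.mem_range.mp hi
    rw [eq_of_le hi.le, eq_of_le hi]

@[elab_as_elim]
theorem walkSums_induction {P : ∀ y s, s ∈ walkSums E d x y → Prop}
    (nil : P x 0 (zero_mem_walkSums E d x))
    (add_edge : ∀ v w s (hs : s ∈ walkSums E d x v) (hvw : E v w), P v s hs →
      P w (s + d v w) (add_edge_mem_walkSums hs hvw))
    (hs : s ∈ walkSums E d x y) : P y s hs := by
  obtain ⟨n, c, rfl, rfl, hE, rfl⟩ := hs
  induction n with
  | zero => exact nil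
  | succ n ih =>
    simp only [Finset.sum_range_succ]
    exact add_edge _ _ _ _ (hE n n.lt_succ_self) (ih fun i hi => hE i (hi.trans n.lt_succ_self))

theorem add_mem_walkSums (hs : s ∈ walkSums E d x y) (ht : t ∈ walkSums E d y z) :
    s + t ∈ walkSums E d x z := by
  induction ht using walkSums_induction with
  | nil => rwa [add_zero]
  | add_edge v w t _ hvw ih =>
    rw [← add_assoc]
    exact add_edge_mem_walkSums ih hvw

theorem walkSums_nonneg (hd : ∀ ⦃a b⦄, E a b → 0 ≤ d a b) (hs : s ∈ walkSums E d x y) :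
    0 ≤ s := by
  induction hs using walkSums_induction with
  | nil => rfl
  | add_edge v w s _ hvw ih => exact add_nonneg ih (hd hvw)

theorem walkSums_bddBelow (hd : ∀ ⦃a b⦄, E a b → 0 ≤ d a b) (x y : X) :
    BddBelow (walkSums E d x y) :=
  ⟨0, fun _ => walkSums_nonneg hd⟩

theorem walkSums_nonempty_iff_joined : (walkSums E d x y).Nonempty ↔ Joined E x y :=
  ⟨fun ⟨_, n, c, h0, hn, hE, _⟩ => ⟨n, c, h0, hn, hE⟩,
    fun ⟨n, c, h0, hn, hE⟩ => ⟨_, n, c, h0, hn, hE, rfl⟩⟩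

theorem Joined.trans (hxy : Joined E x y) (hyz : Joined E y z) : Joined E x z := by
  obtain ⟨s, hs⟩ := walkSums_nonempty_iff_joined (d := 0).mpr hxy
  obtain ⟨t, ht⟩ := walkSums_nonempty_iff_joined (d := 0).mpr hyz
  exact walkSums_nonempty_iff_joined.mp ⟨s + t, add_mem_walkSums hs ht⟩

theorem Joined.mono (hE : ∀ ⦃a b⦄, E a b → E' a b) (h : Joined E x y) : Joined E' x y := by
  obtain ⟨n, c, h0, hn, hc⟩ := h
  exact ⟨n, c, h0, hn, fun i hi => hE (hc i hi)⟩

end Walks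

section ShortestPath

variable {E E' : X → X → Prop} {d d' : X → X → ℝ} {x y z : X}

theorem hatd_nonneg (hd : ∀ ⦃a b⦄, E a b → 0 ≤ d a b) (x y : X) : 0 ≤ hatd E d x y :=
  Real.sInf_nonneg fun _ => walkSums_nonneg hd

theorem hatd_le_of_mem_walkSums (hd : ∀ ⦃a b⦄, E a b → 0 ≤ d a b) {s : ℝ}
    (hs : s ∈ walkSums E d x y) : hatd E d x y ≤ s :=
  csInf_le (walkSums_bddBelow hd x y) hs

theorem hatd_self (hd : ∀ ⦃a b⦄, E a b → 0 ≤ d a b) (x : X) : hatd E d x x = 0 :=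
  (hatd_le_of_mem_walkSums hd (zero_mem_walkSums E d x)).antisymm (hatd_nonneg hd x x)

theorem hatd_le_of_edge (hd : ∀ ⦃a b⦄, E a b → 0 ≤ d a b) (hxy : E x y) :
    hatd E d x y ≤ d x y := by
  simpa only [zero_add] using
    hatd_le_of_mem_walkSums hd (add_edge_mem_walkSums (zero_mem_walkSums E d x) hxy)

open scoped Pointwise in
theorem hatd_triangle (hd : ∀ ⦃a b⦄, E a b → 0 ≤ d a b) (hxy : Joined E x y)
    (hyz : Joined E y z) : hatd E d x z ≤ hatd E d x y + hatd E d y z := by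
  have hxy := walkSums_nonempty_iff_joined (d := d).mpr hxy
  have hyz := walkSums_nonempty_iff_joined (d := d).mpr hyz
  calc sInf (walkSums E d x z)
      ≤ sInf (walkSums E d x y + walkSums E d y z) :=
        csInf_le_csInf (walkSums_bddBelow hd x z) (hxy.add hyz)
          (Set.add_subset_iff.mpr fun _ hs _ ht => add_mem_walkSums hs ht)
    _ = sInf (walkSums E d x y) + sInf (walkSums E d y z) :=
        csInf_add hxy (walkSums_bddBelow hd x y) hyz (walkSums_bddBelow hd y z)

theorem hatd_le_hatd_of_subgraph (hd' : ∀ ⦃a b⦄, E' a b → 0 ≤ d' a b)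
    (hE : ∀ ⦃a b⦄, E a b → E' a b) (hle : ∀ ⦃a b⦄, E a b → d' a b ≤ d a b)
    (hxy : Joined E x y) : hatd E' d' x y ≤ hatd E d x y := by
  refine le_csInf (walkSums_nonempty_iff_joined.mpr hxy) ?_
  rintro _ ⟨n, c, h0, hn, hc, rfl⟩
  calc hatd E' d' x y
      ≤ ∑ i ∈ Finset.range n, d' (c i) (c (i + 1)) :=
        hatd_le_of_mem_walkSums hd' ⟨n, c, h0, hn, fun i hi => hE (hc i hi), rfl⟩
    _ ≤ ∑ i ∈ Finset.range n, d (c i) (c (i + 1)) :=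
        Finset.sum_le_sum fun i hi => hle (hc i (Finset.mem_range.mp hi))

end ShortestPath

/-- A strongly connected directed graph `E` with nonnegative edge weights `d`. Since `Vtx E`
consists of the tails of the edges, `head_mem` is what makes it the set of all endpoints. -/
structure IsWeightedDigraph (E : X → X → Prop) (d : X → X → ℝ) : Prop where
  head_mem : ∀ ⦃a b⦄, E a b → b ∈ Vtx E
  nonneg : ∀ ⦃a b⦄, E a b → 0 ≤ d a b
  connected : ∀ x ∈ Vtx E, ∀ y ∈ Vtx E, Joined E x y

theorem IsGraphPseudometric.isWeightedDigraph {E : X → X → Prop} {d : X → X → ℝ}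
    (h : IsGraphPseudometric E d) : IsWeightedDigraph E d where
  head_mem a _ hab := ⟨a, h.symm hab⟩
  nonneg := h.nonneg
  connected := h.connected

namespace IsWeightedDigraph

variable {E : X → X → Prop} {d : X → X → ℝ} {x y z : X}

theorem hatd_triangle (h : IsWeightedDigraph E d) (hx : x ∈ Vtx E) (hy : y ∈ Vtx E)
    (hz : z ∈ Vtx E) : hatd E d x z ≤ hatd E d x y + hatd E d y z :=
  GraphMetricPaper.hatd_triangle h.nonneg (h.connected x hx y hy) (h.connected y hy z hz)

theorem hatd_le_hatd_add_edge (h : IsWeightedDigraph E d) (hx : x ∈ Vtx E) (hyz : E y z) :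
    hatd E d x z ≤ hatd E d x y + d y z :=
  (h.hatd_triangle hx ⟨z, hyz⟩ (h.head_mem hyz)).trans
    (add_le_add_right (hatd_le_of_edge h.nonneg hyz) _)

end IsWeightedDigraph

/-- The gluing setup for weighted directed graphs: the pieces in `F` are attached to the base
`(Ep, wp)`, which they meet, and outside which they are disjoint from one another; no piece shortens
a distance of the base. The values of `wd` off the edges of the glued graph are arbitrary. -/
structure DigraphGluing (Ep : X → X → Prop) (wp : X → X → ℝ)
    (F : Set ((X → X → Prop) × (X → X → ℝ))) (wd : X → X → ℝ) : Prop where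
  base : IsWeightedDigraph Ep wp
  piece : ∀ f ∈ F, IsWeightedDigraph f.1 f.2
  meet : ∀ f ∈ F, (Vtx f.1 ∩ Vtx Ep).Nonempty
  hatd_base_le : ∀ f ∈ F, ∀ x ∈ Vtx f.1 ∩ Vtx Ep, ∀ y ∈ Vtx f.1 ∩ Vtx Ep,
    hatd Ep wp x y ≤ hatd f.1 f.2 x y
  inter_sub : ∀ f ∈ F, ∀ g ∈ F, f ≠ g → Vtx f.1 ∩ Vtx g.1 ⊆ Vtx Ep
  wd_base : ∀ ⦃a b⦄, Ep a b → wd a b = wp a b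
  wd_piece : ∀ f ∈ F, ∀ ⦃a b⦄, f.1 a b → wd a b = f.2 a b

/-- The invariant satisfied by the length `s` of a walk from `x ∈ V_p` to `y` in the glued graph:
`s` is at least `p̂(x,y)` if `y ∈ V_p`, and at least the length of a passage from `x` to `y` through
`V_f ∩ V_p` for every piece `f` that contains `y`. -/
def DominatesPassage (Ep : X → X → Prop) (wp : X → X → ℝ)
    (F : Set ((X → X → Prop) × (X → X → ℝ))) (x y : X) (s : ℝ) : Prop :=
  (y ∈ Vtx Ep → hatd Ep wp x y ≤ s) ∧
    ∀ f ∈ F, y ∈ Vtx f.1 → ∃ b ∈ Vtx f.1 ∩ Vtx Ep, hatd Ep wp x b + hatd f.1 f.2 b y ≤ s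

section Gluing

variable {Ep : X → X → Prop} {wp : X → X → ℝ} {F : Set ((X → X → Prop) × (X → X → ℝ))}
  {wd : X → X → ℝ} {f g : (X → X → Prop) × (X → X → ℝ)} {v w x y : X} {s : ℝ}

theorem GluingSetup.digraphGluing (hs : GluingSetup Ep wp F wd) : DigraphGluing Ep wp F wd where
  base := hs.hp.isWeightedDigraph
  piece f hf := (hs.hF f hf).isWeightedDigraph
  meet := hs.meet
  hatd_base_le f hf x hx y hy := by
    obtain rfl | hxy := eq_or_ne x y
    · rw [hatd_self hs.hp.nonneg, hatd_self (hs.hF f hf).nonneg]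
    · exact (hs.agree f hf x hx y hy hxy).ge
  inter_sub := hs.inter_sub
  wd_base := hs.wd_p
  wd_piece := hs.wd_F

namespace DigraphGluing

theorem wd_nonneg (hs : DigraphGluing Ep wp F wd) ⦃a b : X⦄ (hab : gluedEdge Ep F a b) :
    0 ≤ wd a b := by
  obtain hab | ⟨f, hf, hab⟩ := hab
  · exact hs.wd_base hab ▸ hs.base.nonneg hab
  · exact hs.wd_piece f hf hab ▸ (hs.piece f hf).nonneg hab

theorem joined_of_base (hs : DigraphGluing Ep wp F wd) (hx : x ∈ Vtx Ep) (hy : y ∈ Vtx Ep) :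
    Joined (gluedEdge Ep F) x y :=
  (hs.base.connected x hx y hy).mono fun _ _ => Or.inl

theorem joined_of_piece (hs : DigraphGluing Ep wp F wd) (hf : f ∈ F) (hx : x ∈ Vtx f.1)
    (hy : y ∈ Vtx f.1) : Joined (gluedEdge Ep F) x y :=
  ((hs.piece f hf).connected x hx y hy).mono fun _ _ hab => Or.inr ⟨f, hf, hab⟩

theorem joined_base_piece (hs : DigraphGluing Ep wp F wd) (hf : f ∈ F) (hx : x ∈ Vtx Ep)
    (hy : y ∈ Vtx f.1) : Joined (gluedEdge Ep F) x y :=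
  have ⟨_, hb⟩ := hs.meet f hf
  (hs.joined_of_base hx hb.2).trans (hs.joined_of_piece hf hb.1 hy)

theorem hatd_glued_le_base (hs : DigraphGluing Ep wp F wd) (hx : x ∈ Vtx Ep) (hy : y ∈ Vtx Ep) :
    hatd (gluedEdge Ep F) wd x y ≤ hatd Ep wp x y :=
  hatd_le_hatd_of_subgraph hs.wd_nonneg (fun _ _ => Or.inl) (fun _ _ hab => (hs.wd_base hab).le)
    (hs.base.connected x hx y hy)

theorem hatd_glued_le_piece (hs : DigraphGluing Ep wp F wd) (hf : f ∈ F) (hx : x ∈ Vtx f.1)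
    (hy : y ∈ Vtx f.1) : hatd (gluedEdge Ep F) wd x y ≤ hatd f.1 f.2 x y :=
  hatd_le_hatd_of_subgraph hs.wd_nonneg (fun _ _ hab => Or.inr ⟨f, hf, hab⟩)
    (fun _ _ hab => (hs.wd_piece f hf hab).le) ((hs.piece f hf).connected x hx y hy)

theorem hatd_glued_le_add (hs : DigraphGluing Ep wp F wd) (hf : f ∈ F) (hx : x ∈ Vtx Ep) {b : X}
    (hb : b ∈ Vtx f.1 ∩ Vtx Ep) (hy : y ∈ Vtx f.1) :
    hatd (gluedEdge Ep F) wd x y ≤ hatd Ep wp x b + hatd f.1 f.2 b y :=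
  (hatd_triangle hs.wd_nonneg (hs.joined_of_base hx hb.2) (hs.joined_of_piece hf hb.1 hy)).trans
    (add_le_add (hs.hatd_glued_le_base hx hb.2) (hs.hatd_glued_le_piece hf hb.1 hy))

theorem hatd_base_le_add (hs : DigraphGluing Ep wp F wd) (hf : f ∈ F) (hx : x ∈ Vtx Ep) {b : X}
    (hb : b ∈ Vtx f.1 ∩ Vtx Ep) (hy : y ∈ Vtx f.1 ∩ Vtx Ep) :
    hatd Ep wp x y ≤ hatd Ep wp x b + hatd f.1 f.2 b y :=
  (hs.base.hatd_triangle hx hb.2 hy.2).trans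
    (add_le_add_right (hs.hatd_base_le f hf b hb y hy) _)

theorem piece_eq_of_notMem_base (hs : DigraphGluing Ep wp F wd) (hf : f ∈ F) (hg : g ∈ F)
    (hyf : y ∈ Vtx f.1) (hyg : y ∈ Vtx g.1) (hy : y ∉ Vtx Ep) : f = g :=
  by_contra fun hne => hy (hs.inter_sub f hf g hg hne ⟨hyf, hyg⟩)

theorem dominatesPassage_of_hatd_base_le (hs : DigraphGluing Ep wp F wd) (hy : y ∈ Vtx Ep)
    (hle : hatd Ep wp x y ≤ s) : DominatesPassage Ep wp F x y s := by
  refine ⟨fun _ => hle, fun f hf hyf => ⟨y, ⟨hyf, hy⟩, ?_⟩⟩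
  rwa [hatd_self (hs.piece f hf).nonneg, add_zero]

theorem dominatesPassage_add_base_edge (hs : DigraphGluing Ep wp F wd) (hx : x ∈ Vtx Ep)
    (h : DominatesPassage Ep wp F x v s) (hvw : Ep v w) :
    DominatesPassage Ep wp F x w (s + wp v w) :=
  hs.dominatesPassage_of_hatd_base_le (hs.base.head_mem hvw) <|
    (hs.base.hatd_le_hatd_add_edge hx hvw).trans (add_le_add_left (h.1 ⟨w, hvw⟩) _)

theorem dominatesPassage_add_piece_edge (hs : DigraphGluing Ep wp F wd) (hf : f ∈ F)
    (hx : x ∈ Vtx Ep) (h : DominatesPassage Ep wp F x v s) (hvw : f.1 v w) :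
    DominatesPassage Ep wp F x w (s + f.2 v w) := by
  obtain ⟨b, hb, hbv⟩ := h.2 f hf ⟨w, hvw⟩
  have hwf : w ∈ Vtx f.1 := (hs.piece f hf).head_mem hvw
  have hbw : hatd Ep wp x b + hatd f.1 f.2 b w ≤ s + f.2 v w := by
    linarith [(hs.piece f hf).hatd_le_hatd_add_edge hb.1 hvw]
  by_cases hw : w ∈ Vtx Ep
  · exact hs.dominatesPassage_of_hatd_base_le hw
      ((hs.hatd_base_le_add hf hx hb ⟨hwf, hw⟩).trans hbw)
  · refine ⟨fun hw' => absurd hw' hw, fun g hg hwg => ?_⟩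
    obtain rfl := hs.piece_eq_of_notMem_base hf hg hwf hwg hw
    exact ⟨b, hb, hbw⟩

theorem dominatesPassage_of_mem_walkSums (hs : DigraphGluing Ep wp F wd) (hx : x ∈ Vtx Ep)
    (h : s ∈ walkSums (gluedEdge Ep F) wd x y) : DominatesPassage Ep wp F x y s := by
  induction h using walkSums_induction with
  | nil => exact hs.dominatesPassage_of_hatd_base_le hx (hatd_self hs.base.nonneg x).le
  | add_edge v w s _ hvw ih =>
    obtain hvw | ⟨f, hf, hvw⟩ := hvw
    · exact hs.wd_base hvw ▸ hs.dominatesPassage_add_base_edge hx ih hvw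
    · exact hs.wd_piece f hf hvw ▸ hs.dominatesPassage_add_piece_edge hf hx ih hvw

end DigraphGluing

end Gluing

theorem gluing_hatd_p_to_g_general {Ep : X → X → Prop} {wp : X → X → ℝ}
    {F : Set ((X → X → Prop) × (X → X → ℝ))} {wd : X → X → ℝ} (hs : DigraphGluing Ep wp F wd)
    {x y : X} {g : (X → X → Prop) × (X → X → ℝ)} (hx : x ∈ Vtx Ep) (hg : g ∈ F)
    (hy : y ∈ Vtx g.1) :
    hatd (gluedEdge Ep F) wd x y =
      sInf {t : ℝ | ∃ b ∈ Vtx g.1 ∩ Vtx Ep, t = hatd Ep wp x b + hatd g.1 g.2 b y} := by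
  apply le_antisymm
  · obtain ⟨b₀, hb₀⟩ := hs.meet g hg
    refine le_csInf ⟨_, b₀, hb₀, rfl⟩ ?_
    rintro _ ⟨b, hb, rfl⟩
    exact hs.hatd_glued_le_add hg hx hb hy
  · have hxy : (walkSums (gluedEdge Ep F) wd x y).Nonempty :=
      walkSums_nonempty_iff_joined.mpr (hs.joined_base_piece hg hx hy)
    refine le_csInf hxy fun s h => ?_
    obtain ⟨b, hb, hle⟩ := (hs.dominatesPassage_of_mem_walkSums hx h).2 g hg hy
    refine le_trans (csInf_le ⟨0, ?_⟩ ⟨b, hb, rfl⟩) hle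
    rintro _ ⟨c, -, rfl⟩
    exact add_nonneg (hatd_nonneg hs.base.nonneg x c) (hatd_nonneg (hs.piece g hg).nonneg c y)

/-- In the gluing setup, for `x ∈ V_p`, `g ∈ 𝔉` and `y ∈ V_g`:
`d̂(x,y) = inf {p̂(x,b) + ĝ(b,y) : b ∈ V_g ∩ V_p}`. -/
theorem gluing_hatd_p_to_g (Ep : X → X → Prop) (wp : X → X → ℝ)
    (F : Set ((X → X → Prop) × (X → X → ℝ))) (wd : X → X → ℝ)
    (hs : GluingSetup Ep wp F wd) :
    ∀ x ∈ Vtx Ep, ∀ g ∈ F, ∀ y ∈ Vtx g.1,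
      hatd (gluedEdge Ep F) wd x y =
        sInf {t : ℝ | ∃ b ∈ Vtx g.1 ∩ Vtx Ep,
          t = hatd Ep wp x b + hatd g.1 g.2 b y} := by
  intro x hx g hg y hy
  exact gluing_hatd_p_to_g_general hs.digraphGluing hx hg hy

end GraphMetricPaper
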